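/- Let B be a real separable Banach space, μ a probability measure on B, k ∈ B, and C ≥ 0 a constant such that |∫_B ∂_k h dμ| ≤ C (∫_B h² dμ)^{1/2} for every h ∈ C_b²(B). Then the form (ℰ_k, C_b²(B)) is closable in L²(μ): whenever a sequence (f_n) ⊂ C_b²(B) satisfies f_n → 0 in L²(μ) and ∂_k f_n → Z in L²(μ) for some Z ∈ L²(μ), one has Z = 0 in L²(μ). -/

import Mathlib

open MeasureTheory Filter

/-- `f ∈ C_b²(B)`: `f` is twice continuously Fréchet differentiable, bounded, with bounded
first and second Fréchet derivatives. -/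
def IsCb2 {B : Type*} [NormedAddCommGroup B] [NormedSpace ℝ B] (f : B → ℝ) : Prop :=
  ContDiff ℝ 2 f ∧ (∃ c, ∀ x, |f x| ≤ c) ∧ (∃ c, ∀ x, ‖fderiv ℝ f x‖ ≤ c) ∧
    (∃ c, ∀ x, ‖fderiv ℝ (fderiv ℝ f) x‖ ≤ c)

/-!
For `g ∈ C_b²(B)` the product rule gives `∫ ∂_k f_n · g = ∫ ∂_k (f_n g) - ∫ f_n ∂_k g`. Here
`f_n g → 0` in `L²(μ)`, so both terms on the right vanish in the limit, the first by the assumed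
estimate; hence `∫ Z g = 0`. Taking `g = cos ∘ L` and `g = sin ∘ L` for continuous linear
functionals `L` shows that the finite measures `Z⁺ μ` and `Z⁻ μ` have the same characteristic
functional, so they coincide and `Z = 0` almost everywhere.
-/

section IsCb2

variable {B E : Type*} [NormedAddCommGroup B] [NormedSpace ℝ B] [NormedAddCommGroup E]
  [NormedSpace ℝ E] {f g : B → ℝ}

lemma isCb2_iff_iteratedFDeriv :
    IsCb2 f ↔ ContDiff ℝ 2 f ∧ ∀ i ≤ 2, ∃ c, ∀ x, ‖iteratedFDeriv ℝ i f x‖ ≤ c := by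
  have norm_two (x : B) : ‖fderiv ℝ (fderiv ℝ f) x‖ = ‖iteratedFDeriv ℝ 2 f x‖ := by
    rw [← norm_iteratedFDeriv_one, norm_iteratedFDeriv_fderiv]
  simp only [IsCb2, norm_two, ← norm_iteratedFDeriv_one (𝕜 := ℝ) f, ← Real.norm_eq_abs,
    ← norm_iteratedFDeriv_zero (𝕜 := ℝ) (f := f)]
  refine and_congr_right fun _ => ⟨fun ⟨h0, h1, h2⟩ i hi => ?_, fun h => ?_⟩
  · interval_cases i
    exacts [h0, h1, h2]
  · exact ⟨h 0 (by simp), h 1 (by simp), h 2 le_rfl⟩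

lemma IsCb2.mul (hf : IsCb2 f) (hg : IsCb2 g) : IsCb2 (fun x => f x * g x) := by
  rw [isCb2_iff_iteratedFDeriv] at hf hg ⊢
  obtain ⟨hf, hf_bdd⟩ := hf
  obtain ⟨hg, hg_bdd⟩ := hg
  choose! a ha using hf_bdd
  choose! b hb using hg_bdd
  refine ⟨hf.mul hg, fun n hn =>
    ⟨∑ i ∈ Finset.range (n + 1), n.choose i * a i * b (n - i), fun x => ?_⟩⟩
  refine (norm_iteratedFDeriv_mul_le hf hg x (mod_cast hn)).trans
    (Finset.sum_le_sum fun i hi => ?_)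
  have hi2 : i ≤ 2 := (Finset.mem_range_succ_iff.mp hi).trans hn
  have ha_nonneg : 0 ≤ a i := (norm_nonneg _).trans (ha i hi2 x)
  gcongr
  · exact ha i hi2 x
  · exact hb (n - i) ((n.sub_le i).trans hn) x

lemma IsCb2.comp_continuousLinearMap {f : E → ℝ} (hf : IsCb2 f) (L : B →L[ℝ] E) :
    IsCb2 (f ∘ L) := by
  rw [isCb2_iff_iteratedFDeriv] at hf ⊢
  obtain ⟨hf, hf_bdd⟩ := hf
  refine ⟨hf.comp L.contDiff, fun i hi => ?_⟩
  obtain ⟨c, hc⟩ := hf_bdd i hi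
  refine ⟨c * ∏ _j : Fin i, ‖L‖, fun x => ?_⟩
  rw [L.iteratedFDeriv_comp_right hf x (mod_cast hi)]
  refine (ContinuousMultilinearMap.norm_compContinuousLinearMap_le _ _).trans ?_
  gcongr
  exact hc (L x)

lemma isCb2_cos : IsCb2 Real.cos :=
  isCb2_iff_iteratedFDeriv.mpr ⟨Real.contDiff_cos, fun i _ => ⟨1, fun x =>
    norm_iteratedFDeriv_eq_norm_iteratedDeriv.trans_le (Real.abs_iteratedDeriv_cos_le_one i x)⟩⟩

lemma isCb2_sin : IsCb2 Real.sin :=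
  isCb2_iff_iteratedFDeriv.mpr ⟨Real.contDiff_sin, fun i _ => ⟨1, fun x =>
    norm_iteratedFDeriv_eq_norm_iteratedDeriv.trans_le (Real.abs_iteratedDeriv_sin_le_one i x)⟩⟩

lemma IsCb2.differentiable (hf : IsCb2 f) : Differentiable ℝ f :=
  hf.1.differentiable two_ne_zero

variable [MeasurableSpace B] [OpensMeasurableSpace B] {μ : Measure B} [IsFiniteMeasure μ]

lemma IsCb2.memLp (hf : IsCb2 f) (p : ENNReal) : MemLp f p μ :=
  let ⟨c, hc⟩ := hf.2.1
  .of_bound hf.1.continuous.aestronglyMeasurable c (ae_of_all μ hc)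

lemma IsCb2.memLp_fderiv_apply (hf : IsCb2 f) (k : B) (p : ENNReal) :
    MemLp (fun x => fderiv ℝ f x k) p μ := by
  obtain ⟨c, hc⟩ := hf.2.2.1
  have hcont : Continuous fun x => fderiv ℝ f x k :=
    (hf.1.continuous_fderiv two_ne_zero).clm_apply continuous_const
  exact .of_bound hcont.aestronglyMeasurable (c * ‖k‖)
    (ae_of_all μ fun x => (fderiv ℝ f x).le_of_opNorm_le (hc x) k)

lemma IsCb2.integral_fderiv_mul (hf : IsCb2 f) (hg : IsCb2 g) (k : B) :
    ∫ x, fderiv ℝ (fun y => f y * g y) x k ∂μ =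
      ∫ x, f x * fderiv ℝ g x k ∂μ + ∫ x, fderiv ℝ f x k * g x ∂μ := by
  have h_int_left : Integrable (fun x => f x * fderiv ℝ g x k) μ :=
    (hf.memLp 2).integrable_mul (hg.memLp_fderiv_apply k 2)
  have h_int_right : Integrable (fun x => fderiv ℝ f x k * g x) μ :=
    (hf.memLp_fderiv_apply k 2).integrable_mul (hg.memLp 2)
  rw [← integral_add h_int_left h_int_right]
  refine integral_congr_ae (ae_of_all μ fun x => ?_)
  simp [fderiv_fun_mul (hf.differentiable x) (hg.differentiable x), mul_comm]

end IsCb2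

section L2

variable {α ι : Type*} [MeasurableSpace α] {μ : Measure α} {l : Filter ι}

lemma inner_toLp_eq_integral_mul {f g : α → ℝ} (hf : MemLp f 2 μ) (hg : MemLp g 2 μ) :
    inner ℝ (hf.toLp f) (hg.toLp g) = ∫ x, f x * g x ∂μ := by
  rw [L2.inner_def]
  refine integral_congr_ae ?_
  filter_upwards [hf.coeFn_toLp, hg.coeFn_toLp] with x hfx hgx
  simp [hfx, hgx, mul_comm]

lemma abs_integral_mul_le_sqrt_mul_sqrt {f g : α → ℝ} (hf : MemLp f 2 μ) (hg : MemLp g 2 μ) :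
    |∫ x, f x * g x ∂μ| ≤ √(∫ x, f x ^ 2 ∂μ) * √(∫ x, g x ^ 2 ∂μ) := by
  simpa only [norm_eq_sqrt_real_inner, inner_toLp_eq_integral_mul, ← sq] using
    abs_real_inner_le_norm (hf.toLp f) (hg.toLp g)

lemma tendsto_integral_mul_of_tendsto_integral_sub_sq {u : ι → α → ℝ} {v g : α → ℝ}
    (hu : ∀ i, MemLp (u i) 2 μ) (hv : MemLp v 2 μ) (hg : MemLp g 2 μ)
    (h : Tendsto (fun i => ∫ x, (u i x - v x) ^ 2 ∂μ) l (nhds 0)) :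
    Tendsto (fun i => ∫ x, u i x * g x ∂μ) l (nhds (∫ x, v x * g x ∂μ)) := by
  have hlim : Tendsto (fun i => √(∫ x, (u i x - v x) ^ 2 ∂μ) * √(∫ x, g x ^ 2 ∂μ)) l
      (nhds 0) := by
    simpa using h.sqrt.mul_const √(∫ x, g x ^ 2 ∂μ)
  refine tendsto_iff_norm_sub_tendsto_zero.mpr
    (squeeze_zero (fun _ => norm_nonneg _) (fun i => ?_) hlim)
  have hug : Integrable (fun x => u i x * g x) μ := (hu i).integrable_mul hg
  have hvg : Integrable (fun x => v x * g x) μ := hv.integrable_mul hg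
  rw [← integral_sub hug hvg]
  simpa only [Real.norm_eq_abs, Pi.sub_apply, sub_mul] using
    abs_integral_mul_le_sqrt_mul_sqrt ((hu i).sub hv) hg

lemma tendsto_integral_mul_sq_of_bounded {u : ι → α → ℝ} {g : α → ℝ} {c : ℝ}
    (hu : ∀ i, MemLp (u i) 2 μ) (hg : ∀ x, |g x| ≤ c)
    (h : Tendsto (fun i => ∫ x, u i x ^ 2 ∂μ) l (nhds 0)) :
    Tendsto (fun i => ∫ x, (u i x * g x) ^ 2 ∂μ) l (nhds 0) := by
  refine squeeze_zero (fun i => integral_nonneg fun x => sq_nonneg _) (fun i => ?_)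
    (by simpa using h.mul_const (c ^ 2))
  rw [← integral_mul_const]
  refine integral_mono_of_nonneg (ae_of_all μ fun x => sq_nonneg _)
    ((hu i).integrable_sq.mul_const _) (ae_of_all μ fun x => ?_)
  simp only [mul_pow]
  exact mul_le_mul_of_nonneg_left (sq_le_sq' (abs_le.mp (hg x)).1 (abs_le.mp (hg x)).2)
    (sq_nonneg _)

end L2

section SignedDensity

variable {α E : Type*} [MeasurableSpace α] {μ : Measure α} [NormedAddCommGroup E]
  [NormedSpace ℝ E] {u : α → ℝ} {g : α → E}

lemma integrable_max_zero_smul (hu : AEMeasurable u μ) (hg : AEStronglyMeasurable g μ)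
    (hug : Integrable (fun x => u x • g x) μ) : Integrable (fun x => max (u x) 0 • g x) μ := by
  refine hug.mono ((hu.max aemeasurable_const).aestronglyMeasurable.smul hg)
    (ae_of_all μ fun x => ?_)
  simp only [norm_smul]
  gcongr
  simpa using abs_max_le_max_abs_abs (a := u x) (b := 0)

lemma integral_withDensity_ofReal_sub (hu : AEMeasurable u μ) (hg : AEStronglyMeasurable g μ)
    (hug : Integrable (fun x => u x • g x) μ) :
    ∫ x, g x ∂(μ.withDensity fun x => ENNReal.ofReal (u x)) -
      ∫ x, g x ∂(μ.withDensity fun x => ENNReal.ofReal (-u x)) = ∫ x, u x • g x ∂μ := by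
  have hpos : Integrable (fun x => max (u x) 0 • g x) μ := integrable_max_zero_smul hu hg hug
  have hneg : Integrable (fun x => max (-u x) 0 • g x) μ :=
    integrable_max_zero_smul hu.neg hg (by simpa using hug.neg)
  rw [integral_withDensity_eq_integral_toReal_smul₀ hu.ennreal_ofReal (by simp),
    integral_withDensity_eq_integral_toReal_smul₀ (by fun_prop) (by simp)]
  simp only [ENNReal.toReal_ofReal']
  rw [← integral_sub hpos hneg]
  simp only [← sub_smul, max_zero_sub_max_neg_zero_eq_self]

lemma integrable_smul_exp_mul_I {φ : α → ℝ} (hu : Integrable u μ) (hφ : AEMeasurable φ μ) :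
    Integrable (fun x => u x • Complex.exp (φ x * Complex.I)) μ :=
  hu.smul_bdd 1 (by fun_prop) (ae_of_all μ fun x => (Complex.norm_exp_ofReal_mul_I (φ x)).le)

end SignedDensity

section CharFun

variable {B : Type*} [NormedAddCommGroup B] [NormedSpace ℝ B]
  [TopologicalSpace.SeparableSpace B] [MeasurableSpace B] [BorelSpace B] {μ : Measure B}

lemma measure_eq_of_charFunDual_eq {ν : Measure B} [IsFiniteMeasure μ] [IsFiniteMeasure ν]
    (h : charFunDual μ = charFunDual ν) : μ = ν := by
  -- The library's injectivity of `charFunDual` needs completeness, so push forward along `e`; this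
  -- loses nothing, since the Borel sets of `B` are the preimages of those of the completion.
  borelize (UniformSpace.Completion B)
  let e : B →L[ℝ] UniformSpace.Completion B := UniformSpace.Completion.toComplL
  have : SecondCountableTopology (UniformSpace.Completion B) :=
    UniformSpace.secondCountable_of_separable _
  have hmap : μ.map e = ν.map e := Measure.ext_of_charFunDual <| by
    ext L
    simp only [charFunDual_map, h]
  have hcomap : ‹MeasurableSpace B› = (borel (UniformSpace.Completion B)).comap e :=
    calc ‹MeasurableSpace B› = borel B := BorelSpace.measurable_eq
      _ = @borel B (.induced e inferInstance) := congrArg (@borel B)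
        (UniformSpace.Completion.isUniformInducing_coe B).isInducing.eq_induced
      _ = (borel (UniformSpace.Completion B)).comap e := borel_comap
  ext s hs
  rw [hcomap] at hs
  obtain ⟨t, ht, rfl⟩ := hs
  rw [← Measure.map_apply e.measurable ht, hmap, Measure.map_apply e.measurable ht]

lemma ae_eq_zero_of_forall_integral_smul_exp_eq_zero {Z : B → ℝ} (hZ : Integrable Z μ)
    (h : ∀ L : StrongDual ℝ B, ∫ x, Z x • Complex.exp (L x * Complex.I) ∂μ = 0) :
    Z =ᵐ[μ] 0 := by
  have := isFiniteMeasure_withDensity_ofReal hZ.2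
  have := isFiniteMeasure_withDensity_ofReal hZ.neg.2
  have hdensity : (μ.withDensity fun x => ENNReal.ofReal (Z x)) =
      μ.withDensity fun x => ENNReal.ofReal (-Z x) := by
    refine measure_eq_of_charFunDual_eq (funext fun L => sub_eq_zero.mp ?_)
    simp only [charFunDual_apply]
    exact (integral_withDensity_ofReal_sub hZ.aemeasurable (by fun_prop)
      (integrable_smul_exp_mul_I hZ (by fun_prop))).trans (h L)
  rw [withDensity_eq_iff (by fun_prop) (by fun_prop) hZ.lintegral_lt_top.ne] at hdensity
  filter_upwards [hdensity] with x hx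
  have hparts := congrArg ENNReal.toReal hx
  rw [ENNReal.toReal_ofReal', ENNReal.toReal_ofReal'] at hparts
  rw [← max_zero_sub_max_neg_zero_eq_self (Z x), hparts, sub_self, Pi.zero_apply]

lemma ae_eq_zero_of_forall_integral_mul_cos_sin_eq_zero {Z : B → ℝ} (hZ : Integrable Z μ)
    (hcos : ∀ L : StrongDual ℝ B, ∫ x, Z x * Real.cos (L x) ∂μ = 0)
    (hsin : ∀ L : StrongDual ℝ B, ∫ x, Z x * Real.sin (L x) ∂μ = 0) : Z =ᵐ[μ] 0 := by
  refine ae_eq_zero_of_forall_integral_smul_exp_eq_zero hZ fun L => ?_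
  rw [← integral_re_add_im (integrable_smul_exp_mul_I hZ (by fun_prop))]
  simp [Complex.exp_ofReal_mul_I_re, Complex.exp_ofReal_mul_I_im, hcos, hsin]

end CharFun

section Closability

variable {B ι : Type*} [NormedAddCommGroup B] [NormedSpace ℝ B] [MeasurableSpace B]
  {μ : Measure B} {l : Filter ι} {k : B} {C : ℝ}

lemma tendsto_integral_fderiv_of_fomin_estimate
    (hbound : ∀ h : B → ℝ, IsCb2 h →
      |∫ x, fderiv ℝ h x k ∂μ| ≤ C * √(∫ x, h x ^ 2 ∂μ))
    {h : ι → B → ℝ} (hh : ∀ i, IsCb2 (h i))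
    (hlim : Tendsto (fun i => ∫ x, h i x ^ 2 ∂μ) l (nhds 0)) :
    Tendsto (fun i => ∫ x, fderiv ℝ (h i) x k ∂μ) l (nhds 0) :=
  squeeze_zero_norm (fun i => hbound (h i) (hh i)) (by simpa using hlim.sqrt.const_mul C)

lemma integral_mul_eq_zero_of_fomin_estimate [OpensMeasurableSpace B] [IsFiniteMeasure μ]
    [l.NeBot]
    (hbound : ∀ h : B → ℝ, IsCb2 h →
      |∫ x, fderiv ℝ h x k ∂μ| ≤ C * √(∫ x, h x ^ 2 ∂μ))
    {f : ι → B → ℝ} (hf : ∀ i, IsCb2 (f i)) {Z : B → ℝ} (hZ : MemLp Z 2 μ)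
    (hf0 : Tendsto (fun i => ∫ x, f i x ^ 2 ∂μ) l (nhds 0))
    (hfZ : Tendsto (fun i => ∫ x, (fderiv ℝ (f i) x k - Z x) ^ 2 ∂μ) l (nhds 0))
    {g : B → ℝ} (hg : IsCb2 g) : ∫ x, Z x * g x ∂μ = 0 := by
  obtain ⟨c, hc⟩ := hg.2.1
  have hderiv_prod : Tendsto (fun i => ∫ x, fderiv ℝ (fun y => f i y * g y) x k ∂μ) l (nhds 0) :=
    tendsto_integral_fderiv_of_fomin_estimate hbound (fun i => (hf i).mul hg)
      (tendsto_integral_mul_sq_of_bounded (fun i => (hf i).memLp 2) hc hf0)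
  have hf_deriv_g : Tendsto (fun i => ∫ x, f i x * fderiv ℝ g x k ∂μ) l (nhds 0) := by
    simpa using tendsto_integral_mul_of_tendsto_integral_sub_sq (fun i => (hf i).memLp 2)
      MemLp.zero (hg.memLp_fderiv_apply k 2) (by simpa using hf0)
  have hderiv_f_g : Tendsto (fun i => ∫ x, fderiv ℝ (f i) x k * g x ∂μ) l
      (nhds (∫ x, Z x * g x ∂μ)) :=
    tendsto_integral_mul_of_tendsto_integral_sub_sq
      (fun i => (hf i).memLp_fderiv_apply k 2) hZ (hg.memLp 2) hfZ
  have hsum := hf_deriv_g.add hderiv_f_g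
  simp only [← (hf _).integral_fderiv_mul hg k, zero_add] at hsum
  exact tendsto_nhds_unique hsum hderiv_prod

theorem closability_of_form_from_fomin_estimate_general [TopologicalSpace.SeparableSpace B]
    [BorelSpace B] [IsFiniteMeasure μ] [l.NeBot]
    (hbound : ∀ h : B → ℝ, IsCb2 h →
      |∫ x, fderiv ℝ h x k ∂μ| ≤ C * √(∫ x, h x ^ 2 ∂μ))
    {f : ι → B → ℝ} (hf : ∀ i, IsCb2 (f i)) {Z : B → ℝ} (hZ : MemLp Z 2 μ)
    (hf0 : Tendsto (fun i => ∫ x, f i x ^ 2 ∂μ) l (nhds 0))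
    (hfZ : Tendsto (fun i => ∫ x, (fderiv ℝ (f i) x k - Z x) ^ 2 ∂μ) l (nhds 0)) :
    Z =ᵐ[μ] 0 :=
  have horth {g : B → ℝ} (hg : IsCb2 g) : ∫ x, Z x * g x ∂μ = 0 :=
    integral_mul_eq_zero_of_fomin_estimate hbound hf hZ hf0 hfZ hg
  ae_eq_zero_of_forall_integral_mul_cos_sin_eq_zero (hZ.integrable one_le_two)
    (fun L => horth (isCb2_cos.comp_continuousLinearMap L))
    (fun L => horth (isCb2_sin.comp_continuousLinearMap L))

end Closability

/-- If `|μ(∂_k h)| ≤ C ‖h‖_{L²(μ)}` for all `h ∈ C_b²(B)`, then the form `(ℰ_k, C_b²(B))`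
is closable in `L²(μ)`. -/
theorem closability_of_form_from_fomin_estimate
    {B : Type*} [NormedAddCommGroup B] [NormedSpace ℝ B] [CompleteSpace B]
    [TopologicalSpace.SeparableSpace B] [MeasurableSpace B] [BorelSpace B]
    (μ : Measure B) [IsProbabilityMeasure μ]
    (k : B) (C : ℝ) (hC : 0 ≤ C)
    (hbound : ∀ h : B → ℝ, IsCb2 h →
      |∫ x, fderiv ℝ h x k ∂μ| ≤ C * Real.sqrt (∫ x, (h x) ^ 2 ∂μ))
    -- a sequence in `C_b²(B)` with `f_n → 0` and `∂_k f_n → Z` in `L²(μ)`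
    (f : ℕ → B → ℝ) (hf : ∀ n, IsCb2 (f n))
    (Z : B → ℝ) (hZ : MemLp Z 2 μ)
    (hf0 : Tendsto (fun n => ∫ x, (f n x) ^ 2 ∂μ) atTop (nhds 0))
    (hfZ : Tendsto (fun n => ∫ x, (fderiv ℝ (f n) x k - Z x) ^ 2 ∂μ) atTop (nhds 0)) :
    Z =ᵐ[μ] 0 :=
  closability_of_form_from_fomin_estimate_general hbound hf hZ hf0 hfZ
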